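/- arXiv:2508.14789 — 5 statements merged into one kernel-verified Lean document; each statement's English description precedes it below -/
import Mathlib

section
/- For real numbers μ₀, μ₁ and σ₀, σ₁ > 0, the Wasserstein-2 distance between the Gaussian measures N(μ₁, σ₁²) and N(μ₀, σ₀²) on ℝ equals sqrt((μ₁ − μ₀)² + (σ₁ − σ₀)²). -/
open MeasureTheory ProbabilityTheory
open scoped ENNReal NNReal

/-- The Wasserstein-`p` distance between two measures on `ℝ`:
the infimum over all couplings `γ` (probability measures on `ℝ × ℝ` with first marginal `μ`
and second marginal `ν`) of `∫ |x₁ - x₂|^p dγ`, raised to the power `1/p`. -/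
noncomputable def wassersteinDist (p : ℝ) (μ ν : Measure ℝ) : ℝ≥0∞ :=
  (⨅ (γ : Measure (ℝ × ℝ)) (_ : IsProbabilityMeasure γ)
      (_ : γ.map Prod.fst = μ) (_ : γ.map Prod.snd = ν),
    ∫⁻ x, ENNReal.ofReal (|x.1 - x.2| ^ p) ∂γ) ^ (1 / p)

/-- Cauchy–Schwarz for the covariance, in terms of standard deviations. -/
lemma covariance_le_mul {Ω : Type*} {mΩ : MeasurableSpace Ω} {P : Measure Ω}
    [IsProbabilityMeasure P] {X Y : Ω → ℝ} (hX : MemLp X 2 P) (hY : MemLp Y 2 P) {s t : ℝ}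
    (hs : 0 < s) (ht : 0 < t) (hVX : Var[X; P] = s ^ 2) (hVY : Var[Y; P] = t ^ 2) :
    cov[X, Y; P] ≤ s * t := by
  have h := variance_nonneg (t • X - s • Y) P
  rw [variance_sub (hX.const_smul t) (hY.const_smul s), variance_smul, variance_smul,
    covariance_smul_left, covariance_smul_right, hVX, hVY] at h
  have hst : 0 < s * t := mul_pos hs ht
  nlinarith

/-- The mean square distance of two random variables is at least the squared distance of their
means plus the squared distance of their standard deviations. -/
lemma sq_add_sq_le_integral_sub_sq {Ω : Type*} {mΩ : MeasurableSpace Ω} {P : Measure Ω}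
    [IsProbabilityMeasure P] {X Y : Ω → ℝ} (hX : MemLp X 2 P) (hY : MemLp Y 2 P) {s t : ℝ}
    (hs : 0 < s) (ht : 0 < t) (hVX : Var[X; P] = s ^ 2) (hVY : Var[Y; P] = t ^ 2) :
    (P[X] - P[Y]) ^ 2 + (s - t) ^ 2 ≤ ∫ ω, (X ω - Y ω) ^ 2 ∂P := by
  have h := variance_eq_sub (hX.sub hY)
  have hmean : P[X - Y] = P[X] - P[Y] :=
    integral_sub (hX.integrable one_le_two) (hY.integrable one_le_two)
  rw [variance_sub hX hY, hmean, hVX, hVY] at h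
  simp only [Pi.pow_apply, Pi.sub_apply] at h
  have hcov := covariance_le_mul hX hY hs ht hVX hVY
  nlinarith

/-- An affine image of the standard Gaussian is Gaussian. -/
lemma gaussianReal_map_affine (m s : ℝ) :
    (gaussianReal 0 1).map (fun x ↦ s * x + m) = gaussianReal m (s ^ 2).toNNReal := by
  have h : (fun x : ℝ ↦ s * x + m) = (· + m) ∘ (s * ·) := rfl
  rw [h, ← Measure.map_map (by fun_prop) (by fun_prop), gaussianReal_map_const_mul,
    gaussianReal_map_add_const]
  congr 1
  · simp
  · ext
    simp [sq_nonneg]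

/-- The second moment of a Gaussian measure. -/
lemma lintegral_sq_gaussianReal (m s : ℝ) :
    ∫⁻ x, ENNReal.ofReal (x ^ 2) ∂gaussianReal m (s ^ 2).toNNReal =
      ENNReal.ofReal (m ^ 2 + s ^ 2) := by
  have hL : MemLp (fun x : ℝ ↦ x) 2 (gaussianReal m (s ^ 2).toNNReal) := memLp_id_gaussianReal 2
  rw [← ofReal_integral_eq_lintegral_ofReal hL.integrable_sq (ae_of_all _ fun x ↦ sq_nonneg x)]
  have h := variance_eq_sub hL
  rw [variance_fun_id_gaussianReal, integral_id_gaussianReal, Real.coe_toNNReal _ (sq_nonneg s)] at h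
  simp only [Pi.pow_apply] at h
  congr 1
  linarith

/-- The transport cost of any coupling of two Gaussian measures is bounded below. -/
lemma le_lintegral_of_gaussianReal_marginals {m n s t : ℝ} (hs : 0 < s) (ht : 0 < t)
    {γ : Measure (ℝ × ℝ)} [IsProbabilityMeasure γ]
    (h₁ : γ.map Prod.fst = gaussianReal m (s ^ 2).toNNReal)
    (h₂ : γ.map Prod.snd = gaussianReal n (t ^ 2).toNNReal) :
    ENNReal.ofReal ((m - n) ^ 2 + (s - t) ^ 2) ≤
      ∫⁻ x, ENNReal.ofReal ((x.1 - x.2) ^ 2) ∂γ := by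
  have hX : HasLaw Prod.fst (gaussianReal m (s ^ 2).toNNReal) γ := ⟨by fun_prop, h₁⟩
  have hY : HasLaw Prod.snd (gaussianReal n (t ^ 2).toNNReal) γ := ⟨by fun_prop, h₂⟩
  have hLX : MemLp Prod.fst 2 γ :=
    (memLp_map_measure_iff aestronglyMeasurable_id hX.aemeasurable).1
      (h₁ ▸ memLp_id_gaussianReal 2)
  have hLY : MemLp Prod.snd 2 γ :=
    (memLp_map_measure_iff aestronglyMeasurable_id hY.aemeasurable).1
      (h₂ ▸ memLp_id_gaussianReal 2)
  have hVX : Var[Prod.fst; γ] = s ^ 2 := by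
    rw [hX.variance_eq, variance_id_gaussianReal, Real.coe_toNNReal _ (sq_nonneg s)]
  have hVY : Var[Prod.snd; γ] = t ^ 2 := by
    rw [hY.variance_eq, variance_id_gaussianReal, Real.coe_toNNReal _ (sq_nonneg t)]
  have h := sq_add_sq_le_integral_sub_sq hLX hLY hs ht hVX hVY
  rw [hX.integral_eq, hY.integral_eq, integral_id_gaussianReal, integral_id_gaussianReal] at h
  have hint : Integrable (fun x : ℝ × ℝ ↦ (x.1 - x.2) ^ 2) γ := (hLX.sub hLY).integrable_sq
  rw [← ofReal_integral_eq_lintegral_ofReal hint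
    (ae_of_all _ fun x ↦ sq_nonneg _)]
  exact ENNReal.ofReal_le_ofReal h

/-- For Gaussian measures on `ℝ`,
`W₂(N(μ₁, σ₁²), N(μ₀, σ₀²)) = sqrt((μ₁ - μ₀)² + (σ₁ - σ₀)²)`. -/
theorem wasserstein2_gaussian (μ₀ μ₁ σ₀ σ₁ : ℝ) (hσ₀ : 0 < σ₀) (hσ₁ : 0 < σ₁) :
    wassersteinDist 2 (gaussianReal μ₁ (σ₁ ^ 2).toNNReal) (gaussianReal μ₀ (σ₀ ^ 2).toNNReal) =
      ENNReal.ofReal (Real.sqrt ((μ₁ - μ₀) ^ 2 + (σ₁ - σ₀) ^ 2)) := by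
  unfold wassersteinDist
  simp only [Real.rpow_ofNat, sq_abs]
  have hcost : (⨅ (γ : Measure (ℝ × ℝ)) (_ : IsProbabilityMeasure γ)
      (_ : γ.map Prod.fst = gaussianReal μ₁ (σ₁ ^ 2).toNNReal)
      (_ : γ.map Prod.snd = gaussianReal μ₀ (σ₀ ^ 2).toNNReal),
      ∫⁻ x, ENNReal.ofReal ((x.1 - x.2) ^ 2) ∂γ) =
      ENNReal.ofReal ((μ₁ - μ₀) ^ 2 + (σ₁ - σ₀) ^ 2) := by
    refine le_antisymm ?_ (le_iInf fun γ ↦ le_iInf fun _ ↦ le_iInf fun h₁ ↦ le_iInf fun h₂ ↦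
      le_lintegral_of_gaussianReal_marginals hσ₁ hσ₀ h₁ h₂)
    let T : ℝ → ℝ × ℝ := fun x ↦ (σ₁ * x + μ₁, σ₀ * x + μ₀)
    have hT : Measurable T := by fun_prop
    refine iInf_le_of_le ((gaussianReal 0 1).map T) <|
      iInf_le_of_le (Measure.isProbabilityMeasure_map hT.aemeasurable) <|
      iInf_le_of_le ?_ <| iInf_le_of_le ?_ ?_
    · rw [Measure.map_map measurable_fst hT]
      exact gaussianReal_map_affine μ₁ σ₁
    · rw [Measure.map_map measurable_snd hT]
      exact gaussianReal_map_affine μ₀ σ₀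
    · rw [← lintegral_sq_gaussianReal, ← gaussianReal_map_affine,
        lintegral_map (by fun_prop) hT, lintegral_map (by fun_prop) (by fun_prop)]
      refine le_of_eq (lintegral_congr fun x ↦ ?_)
      congr 1
      ring
  rw [hcost, ENNReal.ofReal_rpow_of_nonneg (by positivity) (by norm_num), Real.sqrt_eq_rpow]
end

section
/- Let p ≥ 1 and let μ, ν be probability measures on ℝ with finite p-th moments, with cumulative distribution functions F and G. Then W_p(μ,ν)^p = ∫₀¹ |F⁻¹(t) − G⁻¹(t)|^p dt, where F⁻¹(t) = inf{x ∈ ℝ : F(x) ≥ t} and G⁻¹(t) = inf{x ∈ ℝ : G(x) ≥ t} are the generalized inverse (quantile) functions. -/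
open MeasureTheory ProbabilityTheory Filter
open scoped ENNReal NNReal

/-- The cumulative distribution function of a measure on `ℝ`. -/
noncomputable def cdfOf (μ : Measure ℝ) (x : ℝ) : ℝ := (μ (Set.Iic x)).toReal

/-- The generalized inverse (quantile function) of the cdf of `μ`:
`F⁻¹(t) = inf {x : F x ≥ t}`. -/
noncomputable def quantileOf (μ : Measure ℝ) (t : ℝ) : ℝ := sInf {x : ℝ | t ≤ cdfOf μ x}

open Set

lemma cdfOf_eq_cdf (μ : Measure ℝ) [IsProbabilityMeasure μ] (x : ℝ) : cdfOf μ x = cdf μ x := by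
  rw [cdf_eq_real]; rfl

lemma ofReal_cdfOf (μ : Measure ℝ) [IsProbabilityMeasure μ] (x : ℝ) :
    ENNReal.ofReal (cdfOf μ x) = μ (Iic x) :=
  ENNReal.ofReal_toReal (measure_ne_top _ _)

/-- The Galois connection between the quantile function and the cdf. -/
lemma quantileOf_le_iff (μ : Measure ℝ) [IsProbabilityMeasure μ] {u : ℝ} (hu : u ∈ Ioo (0 : ℝ) 1)
    (x : ℝ) : quantileOf μ u ≤ x ↔ u ≤ cdfOf μ x := by
  have hbdd : BddBelow {x : ℝ | u ≤ cdfOf μ x} := by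
    obtain ⟨b, hb⟩ := ((tendsto_cdf_atBot μ).eventually (gt_mem_nhds hu.1)).exists
    refine ⟨b, fun y hy => ?_⟩
    rw [mem_ofPred_eq, cdfOf_eq_cdf] at hy
    by_contra! hyb
    exact absurd (monotone_cdf μ hyb.le) (by linarith)
  have hne : {x : ℝ | u ≤ cdfOf μ x}.Nonempty := by
    obtain ⟨b, hb⟩ := ((tendsto_cdf_atTop μ).eventually (lt_mem_nhds hu.2)).exists
    exact ⟨b, by rw [mem_ofPred_eq, cdfOf_eq_cdf]; exact hb.le⟩
  refine ⟨fun h => ?_, fun h => csInf_le hbdd h⟩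
  rw [cdfOf_eq_cdf]
  have hcont : Tendsto (cdf μ) (nhdsWithin x (Ioi x)) (nhds (cdf μ x)) :=
    ((cdf μ).right_continuous x).mono Ioi_subset_Ici_self
  refine ge_of_tendsto hcont (eventually_nhdsWithin_of_forall fun y hy => ?_)
  obtain ⟨z, hz, hzy⟩ := exists_lt_of_csInf_lt hne (lt_of_le_of_lt h hy)
  rw [mem_ofPred_eq, cdfOf_eq_cdf] at hz
  exact hz.trans (monotone_cdf μ hzy.le)

lemma aemeasurable_quantileOf (μ : Measure ℝ) [IsProbabilityMeasure μ] :
    AEMeasurable (quantileOf μ) (volume.restrict (Ioo (0 : ℝ) 1)) :=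
  aemeasurable_restrict_of_monotoneOn measurableSet_Ioo fun _ ha _ hb hab =>
    (quantileOf_le_iff μ ha _).2 (hab.trans ((quantileOf_le_iff μ hb _).1 le_rfl))

/-- The quantile function pushes the uniform distribution on `(0, 1)` forward to `μ`. -/
lemma map_quantileOf (μ : Measure ℝ) [IsProbabilityMeasure μ] :
    (volume.restrict (Ioo (0 : ℝ) 1)).map (quantileOf μ) = μ := by
  refine Measure.ext_of_Iic _ _ fun x => ?_
  rw [Measure.map_apply_of_aemeasurable (aemeasurable_quantileOf μ) measurableSet_Iic,
    Measure.restrict_apply' measurableSet_Ioo]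
  have hset : quantileOf μ ⁻¹' Iic x ∩ Ioo 0 1 = Iic (cdfOf μ x) ∩ Ioo 0 1 := by
    ext u
    exact and_congr_left fun hu => quantileOf_le_iff μ hu x
  have hle : cdfOf μ x ≤ 1 := by rw [cdfOf_eq_cdf]; exact cdf_le_one μ x
  rw [hset, ← Measure.restrict_apply' measurableSet_Ioo, restrict_Ioo_eq_restrict_Ioc,
    Measure.restrict_apply' measurableSet_Ioc, inter_comm, Ioc_inter_Iic, min_eq_right hle,
    Real.volume_Ioc, sub_zero, ofReal_cdfOf]

/-- The comonotone coupling of `μ` and `ν`. -/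
noncomputable def quantileCoupling (μ ν : Measure ℝ) : Measure (ℝ × ℝ) :=
  (volume.restrict (Ioo (0 : ℝ) 1)).map fun u => (quantileOf μ u, quantileOf ν u)

section Coupling

variable (μ ν : Measure ℝ) [IsProbabilityMeasure μ] [IsProbabilityMeasure ν]

lemma aemeasurable_quantileOf_prodMk :
    AEMeasurable (fun u => (quantileOf μ u, quantileOf ν u)) (volume.restrict (Ioo (0 : ℝ) 1)) :=
  (aemeasurable_quantileOf μ).prodMk (aemeasurable_quantileOf ν)

lemma map_fst_quantileCoupling : (quantileCoupling μ ν).map Prod.fst = μ := by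
  rw [quantileCoupling, AEMeasurable.map_map_of_aemeasurable measurable_fst.aemeasurable
    (aemeasurable_quantileOf_prodMk μ ν)]
  exact map_quantileOf μ

lemma map_snd_quantileCoupling : (quantileCoupling μ ν).map Prod.snd = ν := by
  rw [quantileCoupling, AEMeasurable.map_map_of_aemeasurable measurable_snd.aemeasurable
    (aemeasurable_quantileOf_prodMk μ ν)]
  exact map_quantileOf ν

lemma isProbabilityMeasure_quantileCoupling : IsProbabilityMeasure (quantileCoupling μ ν) := by
  have : IsProbabilityMeasure ((quantileCoupling μ ν).map Prod.fst) := by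
    rw [map_fst_quantileCoupling]; infer_instance
  exact Measure.isProbabilityMeasure_of_map Prod.fst

lemma volume_quantileOf_le_lt_le (s t : ℝ) :
    volume.restrict (Ioo (0 : ℝ) 1) {u | quantileOf μ u ≤ s ∧ t < quantileOf ν u} ≤
      μ (Iic s) - ν (Iic t) := by
  rw [Measure.restrict_apply' measurableSet_Ioo]
  calc volume ({u | quantileOf μ u ≤ s ∧ t < quantileOf ν u} ∩ Ioo 0 1)
      ≤ volume (Ioc (cdfOf ν t) (cdfOf μ s)) := by
        refine measure_mono fun u hu => ⟨?_, (quantileOf_le_iff μ hu.2 s).1 hu.1.1⟩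
        exact lt_of_not_ge fun h => hu.1.2.not_ge ((quantileOf_le_iff ν hu.2 t).2 h)
    _ = μ (Iic s) - ν (Iic t) := by
        rw [Real.volume_Ioc, ENNReal.ofReal_sub _ (show 0 ≤ cdfOf ν t from ENNReal.toReal_nonneg),
          ofReal_cdfOf, ofReal_cdfOf]

end Coupling

lemma measurableSet_le_lt {Ω : Type*} [MeasurableSpace Ω] {f g h k : Ω → ℝ} (hf : Measurable f)
    (hg : Measurable g) (hh : Measurable h) (hk : Measurable k) :
    MeasurableSet {ω | f ω ≤ g ω ∧ h ω < k ω} := by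
  rw [ofPred_and]
  exact (measurableSet_le hf hg).inter (measurableSet_lt hh hk)

lemma sub_le_measure_le_lt {Ω : Type*} [MeasurableSpace Ω] (γ : Measure Ω) {f g : Ω → ℝ}
    (hf : Measurable f) (hg : Measurable g) (s t : ℝ) :
    γ.map f (Iic s) - γ.map g (Iic t) ≤ γ {ω | f ω ≤ s ∧ t < g ω} := by
  rw [Measure.map_apply hf measurableSet_Iic, Measure.map_apply hg measurableSet_Iic,
    tsub_le_iff_right]
  refine (measure_mono fun ω hω => ?_).trans (measure_union_le _ _)
  by_cases h : t < g ω
  · exact Or.inl ⟨hω, h⟩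
  · exact Or.inr (not_lt.1 h)

/-- `h₊ ^ p` is a mixture of the functions `(h - a)₊`. -/
lemma exists_lintegral_ofReal_sub_eq {p : ℝ} (hp : 1 ≤ p) :
    ∃ m : Measure ℝ, SFinite m ∧
      ∀ h : ℝ, ENNReal.ofReal (max h 0 ^ p) = ∫⁻ a, ENNReal.ofReal (h - a) ∂m := by
  rcases hp.eq_or_lt with rfl | hp
  · refine ⟨Measure.dirac 0, inferInstance, fun h => ?_⟩
    simp
  have hdens : Measurable fun a : ℝ => ENNReal.ofReal (p * (p - 1) * a ^ (p - 2)) := by fun_prop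
  refine ⟨(volume.restrict (Ioi 0)).withDensity fun a => ENNReal.ofReal (p * (p - 1) * a ^ (p - 2)),
    inferInstance, fun h => ?_⟩
  rw [lintegral_withDensity_eq_lintegral_mul _ hdens (by fun_prop)]
  simp only [Pi.mul_apply]
  rcases le_or_gt h 0 with hh | hh
  · rw [max_eq_right hh, Real.zero_rpow (by linarith), ENNReal.ofReal_zero]
    refine (setLIntegral_eq_zero measurableSet_Ioi fun a ha => ?_).symm
    have ha : 0 < a := ha
    simp [ENNReal.ofReal_of_nonpos (show h - a ≤ 0 by linarith)]
  rw [max_eq_left hh.le, ← Ioc_union_Ioi_eq_Ioi hh.le,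
    lintegral_union measurableSet_Ioi (Ioc_disjoint_Ioi le_rfl)]
  rw [setLIntegral_eq_zero (s := Ioi h) measurableSet_Ioi fun a ha => by
    have ha : h < a := ha
    simp [ENNReal.ofReal_of_nonpos (show h - a ≤ 0 by linarith)], add_zero]
  have hpp : 0 ≤ p * (p - 1) := by nlinarith
  have hnonneg : ∀ a, 0 < a → a ≤ h → 0 ≤ p * (p - 1) * a ^ (p - 2) * (h - a) := fun a ha hah =>
    mul_nonneg (mul_nonneg hpp (Real.rpow_nonneg ha.le _)) (by linarith)
  have hcont : ContinuousOn (fun a : ℝ => p * h * a ^ (p - 1) - (p - 1) * a ^ p) (Icc 0 h) := by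
    have h₁ := Real.continuous_rpow_const (show 0 ≤ p - 1 by linarith)
    have h₂ := Real.continuous_rpow_const (show 0 ≤ p by linarith)
    fun_prop
  have hderiv : ∀ a ∈ Ioo 0 h, HasDerivAt (fun a : ℝ => p * h * a ^ (p - 1) - (p - 1) * a ^ p)
      (p * (p - 1) * a ^ (p - 2) * (h - a)) a := by
    intro a ha
    have h₁ := (Real.hasDerivAt_rpow_const (p := p - 1) (Or.inl ha.1.ne')).const_mul (p * h)
    have h₂ := (Real.hasDerivAt_rpow_const (p := p) (Or.inl ha.1.ne')).const_mul (p - 1)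
    refine (h₁.sub h₂).congr_deriv ?_
    have h₃ : a ^ (p - 1) = a ^ (p - 2) * a := by
      rw [← Real.rpow_add_one ha.1.ne']; ring_nf
    rw [h₃, show p - 1 - 1 = p - 2 by ring]
    ring
  have hint := intervalIntegral.integrableOn_deriv_of_nonneg hcont hderiv
    fun a ha => hnonneg a ha.1 ha.2.le
  have hftc := intervalIntegral.integral_eq_sub_of_hasDerivAt_of_le hh.le hcont hderiv
    ((intervalIntegrable_iff_integrableOn_Ioc_of_le hh.le).2 hint)
  rw [intervalIntegral.integral_of_le hh.le] at hftc
  have hval : p * h * h ^ (p - 1) - (p - 1) * h ^ p -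
      (p * h * 0 ^ (p - 1) - (p - 1) * 0 ^ p) = h ^ p := by
    have h₃ : h ^ p = h ^ (p - 1) * h := by
      rw [← Real.rpow_add_one hh.ne']; ring_nf
    rw [Real.zero_rpow (by linarith), Real.zero_rpow (by linarith), h₃]
    ring
  rw [← hval, ← hftc, ofReal_integral_eq_lintegral_ofReal hint
    (ae_restrict_of_forall_mem measurableSet_Ioc fun a ha => hnonneg a ha.1 ha.2)]
  refine setLIntegral_congr_fun measurableSet_Ioc fun a ha => ?_
  exact ENNReal.ofReal_mul (mul_nonneg hpp (Real.rpow_nonneg ha.1.le _))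

lemma lintegral_ofReal_sub_sub_eq {Ω : Type*} [MeasurableSpace Ω] (γ : Measure Ω) [SFinite γ]
    {f g : Ω → ℝ} (hf : Measurable f) (hg : Measurable g) (a : ℝ) :
    ∫⁻ ω, ENNReal.ofReal (g ω - f ω - a) ∂γ = ∫⁻ s, γ {ω | f ω ≤ s ∧ s + a < g ω} := by
  have hA : MeasurableSet {x : Ω × ℝ | f x.1 ≤ x.2 ∧ x.2 + a < g x.1} :=
    measurableSet_le_lt (by fun_prop) (by fun_prop) (by fun_prop) (by fun_prop)
  have h := (Measure.prod_apply (μ := γ) (ν := volume) hA).symm.trans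
    (Measure.prod_apply_symm (μ := γ) (ν := volume) hA)
  refine Eq.trans (lintegral_congr fun ω => ?_) h
  have : Prod.mk ω ⁻¹' {x : Ω × ℝ | f x.1 ≤ x.2 ∧ x.2 + a < g x.1} = Ico (f ω) (g ω - a) := by
    ext s
    simp [lt_sub_iff_add_lt]
  rw [this, Real.volume_Ico]
  congr 1
  ring

lemma lintegral_max_sub_rpow_mono {Ω Ω' : Type*} [MeasurableSpace Ω] [MeasurableSpace Ω']
    {p : ℝ} (hp : 1 ≤ p) (γ : Measure Ω) [SFinite γ] (γ' : Measure Ω') [SFinite γ']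
    {f g : Ω → ℝ} {f' g' : Ω' → ℝ} (hf : Measurable f) (hg : Measurable g)
    (hf' : Measurable f') (hg' : Measurable g')
    (h : ∀ s t, γ {ω | f ω ≤ s ∧ t < g ω} ≤ γ' {ω | f' ω ≤ s ∧ t < g' ω}) :
    ∫⁻ ω, ENNReal.ofReal (max (g ω - f ω) 0 ^ p) ∂γ ≤
      ∫⁻ ω, ENNReal.ofReal (max (g' ω - f' ω) 0 ^ p) ∂γ' := by
  obtain ⟨m, _, hm⟩ := exists_lintegral_ofReal_sub_eq hp
  simp_rw [hm]
  rw [lintegral_lintegral_swap (μ := γ) (by fun_prop),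
    lintegral_lintegral_swap (μ := γ') (by fun_prop)]
  refine lintegral_mono fun a => ?_
  rw [lintegral_ofReal_sub_sub_eq γ hf hg, lintegral_ofReal_sub_sub_eq γ' hf' hg']
  exact lintegral_mono fun s => h s _

lemma ofReal_abs_sub_rpow {p : ℝ} (hp : 0 < p) (x y : ℝ) :
    ENNReal.ofReal (|x - y| ^ p) =
      ENNReal.ofReal (max (y - x) 0 ^ p) + ENNReal.ofReal (max (x - y) 0 ^ p) := by
  rcases le_total x y with h | h
  · rw [abs_of_nonpos (by linarith), max_eq_left (by linarith), max_eq_right (by linarith),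
      Real.zero_rpow hp.ne', ENNReal.ofReal_zero, add_zero, neg_sub]
  · rw [abs_of_nonneg (by linarith), max_eq_right (by linarith), max_eq_left (by linarith),
      Real.zero_rpow hp.ne', ENNReal.ofReal_zero, zero_add]

/-- The comonotone coupling is optimal for the cost `|x - y| ^ p`. -/
lemma lintegral_quantileCoupling_le {p : ℝ} (hp : 1 ≤ p) (μ ν : Measure ℝ)
    [IsProbabilityMeasure μ] [IsProbabilityMeasure ν] (γ : Measure (ℝ × ℝ)) [SFinite γ]
    (hγμ : γ.map Prod.fst = μ) (hγν : γ.map Prod.snd = ν) :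
    ∫⁻ x, ENNReal.ofReal (|x.1 - x.2| ^ p) ∂quantileCoupling μ ν ≤
      ∫⁻ x, ENNReal.ofReal (|x.1 - x.2| ^ p) ∂γ := by
  have := isProbabilityMeasure_quantileCoupling μ ν
  have hmeas := aemeasurable_quantileOf_prodMk μ ν
  simp_rw [ofReal_abs_sub_rpow (zero_lt_one.trans_le hp)]
  rw [lintegral_add_left (by fun_prop), lintegral_add_left (by fun_prop)]
  refine add_le_add
    (lintegral_max_sub_rpow_mono hp _ _ measurable_fst measurable_snd measurable_fst
      measurable_snd fun s t => ?_)
    (lintegral_max_sub_rpow_mono hp _ _ measurable_snd measurable_fst measurable_snd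
      measurable_fst fun s t => ?_)
  · rw [quantileCoupling, Measure.map_apply_of_aemeasurable hmeas
      (measurableSet_le_lt measurable_fst measurable_const measurable_const measurable_snd)]
    refine (volume_quantileOf_le_lt_le μ ν s t).trans ?_
    simpa only [hγμ, hγν] using sub_le_measure_le_lt γ measurable_fst measurable_snd s t
  · rw [quantileCoupling, Measure.map_apply_of_aemeasurable hmeas
      (measurableSet_le_lt measurable_snd measurable_const measurable_const measurable_fst)]
    refine (volume_quantileOf_le_lt_le ν μ s t).trans ?_
    simpa only [hγμ, hγν] using sub_le_measure_le_lt γ measurable_snd measurable_fst s t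

/-- For probability measures `μ, ν` on `ℝ` with finite `p`-th moments (`p ≥ 1`),
`W_p(μ, ν)^p = ∫₀¹ |F⁻¹(t) - G⁻¹(t)|^p dt` where `F⁻¹, G⁻¹` are the quantile functions. -/
theorem wasserstein_pow_eq_integral_quantile
    (p : ℝ) (hp : 1 ≤ p) (μ ν : Measure ℝ)
    (hμ : IsProbabilityMeasure μ) (hν : IsProbabilityMeasure ν)
    (hmomμ : ∫⁻ x, ENNReal.ofReal (|x| ^ p) ∂μ < ⊤)
    (hmomν : ∫⁻ x, ENNReal.ofReal (|x| ^ p) ∂ν < ⊤) :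
    wassersteinDist p μ ν ^ p =
      ∫⁻ t in Set.Ioo (0 : ℝ) 1,
        ENNReal.ofReal (|quantileOf μ t - quantileOf ν t| ^ p) := by
  have hp₀ : p ≠ 0 := by linarith
  rw [wassersteinDist, ← ENNReal.rpow_mul, one_div_mul_cancel hp₀, ENNReal.rpow_one]
  have hcost : ∫⁻ x, ENNReal.ofReal (|x.1 - x.2| ^ p) ∂quantileCoupling μ ν =
      ∫⁻ t in Set.Ioo (0 : ℝ) 1, ENNReal.ofReal (|quantileOf μ t - quantileOf ν t| ^ p) :=
    lintegral_map' (by fun_prop) (aemeasurable_quantileOf_prodMk μ ν)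
  rw [← hcost]
  refine le_antisymm ?_ ?_
  · exact iInf₂_le_of_le _ (isProbabilityMeasure_quantileCoupling μ ν) <|
      iInf₂_le_of_le (map_fst_quantileCoupling μ ν) (map_snd_quantileCoupling μ ν) le_rfl
  · exact le_iInf₂ fun γ _ => le_iInf₂ fun hγμ hγν =>
      lintegral_quantileCoupling_le hp μ ν γ hγμ hγν
end

section
/- Let ρ be a probability measure on ℝ with finite second moment, mean 0 (∫ x dρ = 0) and unit second moment (∫ x² dρ = 1). For real numbers m₁, m₂ and s₁, s₂ ≥ 0, let μᵢ be the pushforward of ρ under the map x ↦ mᵢ + sᵢ·x (i = 1, 2). Then W_2(μ₁, μ₂) = sqrt((m₁ − m₂)² + (s₁ − s₂)²). -/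
open MeasureTheory ProbabilityTheory Filter
open scoped ENNReal NNReal

/-- Cauchy-Schwarz inequality for the covariance. -/
lemma sq_covariance_le_variance_mul_variance {Ω : Type*} [MeasurableSpace Ω] {μ : Measure Ω}
    [IsFiniteMeasure μ] {X Y : Ω → ℝ} (hX : MemLp X 2 μ) (hY : MemLp Y 2 μ) :
    cov[X, Y; μ] ^ 2 ≤ Var[X; μ] * Var[Y; μ] := by
  have hquad (t : ℝ) : 0 ≤ Var[Y; μ] * (t * t) + 2 * cov[X, Y; μ] * t + Var[X; μ] := by
    have h := variance_nonneg (X + t • Y) μ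
    rw [variance_add hX (hY.const_smul t), variance_smul, covariance_smul_right] at h
    linarith
  have hdiscrim := discrim_le_zero hquad
  rw [discrim] at hdiscrim
  linarith

/-- The mean square distance of two real random variables is bounded below by the squared distance
of their means plus the squared distance of their standard deviations. -/
lemma sq_sub_add_sq_sub_le_integral_sq_sub {Ω : Type*} [MeasurableSpace Ω] {μ : Measure Ω}
    [IsProbabilityMeasure μ] {X Y : Ω → ℝ} (hX : MemLp X 2 μ) (hY : MemLp Y 2 μ) :
    (μ[X] - μ[Y]) ^ 2 + (√(Var[X; μ]) - √(Var[Y; μ])) ^ 2 ≤ ∫ ω, (X ω - Y ω) ^ 2 ∂μ := by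
  have hcov : cov[X, Y; μ] ≤ √(Var[X; μ]) * √(Var[Y; μ]) := by
    rw [← Real.sqrt_mul (variance_nonneg X μ)]
    exact Real.le_sqrt_of_sq_le (sq_covariance_le_variance_mul_variance hX hY)
  have hvar := variance_eq_sub (hX.sub hY)
  rw [variance_sub hX hY] at hvar
  simp only [Pi.pow_apply, Pi.sub_apply] at hvar
  rw [integral_sub (hX.integrable one_le_two) (hY.integrable one_le_two)] at hvar
  have hsX := Real.sq_sqrt (variance_nonneg X μ)
  have hsY := Real.sq_sqrt (variance_nonneg Y μ)
  linarith

/-- A random variable whose law is the pushforward of a standardized law `ρ` under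
`x ↦ m + s * x` is square integrable, with mean `m` and standard deviation `s`. -/
lemma memLp_and_moments_of_map_eq_locationScale {Ω : Type*} [MeasurableSpace Ω] {μ : Measure Ω}
    {ρ : Measure ℝ} [IsProbabilityMeasure ρ] (hρ : MemLp (fun x : ℝ => x) 2 ρ)
    (hmean : ∫ x, x ∂ρ = 0) (hvar : ∫ x, x ^ 2 ∂ρ = 1) {m s : ℝ} (hs : 0 ≤ s)
    {X : Ω → ℝ} (hX : Measurable X) (hlaw : μ.map X = ρ.map (fun x => m + s * x)) :
    MemLp X 2 μ ∧ μ[X] = m ∧ √(Var[X; μ]) = s := by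
  have hmeas : Measurable fun x : ℝ => m + s * x := by fun_prop
  refine ⟨?_, ?_, ?_⟩
  · have h : MemLp id 2 (ρ.map fun x => m + s * x) :=
      (memLp_map_measure_iff aestronglyMeasurable_id hmeas.aemeasurable).2
        ((memLp_const m).add (hρ.const_mul s))
    rw [← hlaw] at h
    exact h.comp_of_map hX.aemeasurable
  · rw [← integral_map (f := fun y : ℝ => y) hX.aemeasurable aestronglyMeasurable_id, hlaw,
      integral_map (f := fun y : ℝ => y) hmeas.aemeasurable aestronglyMeasurable_id,
      integral_add (integrable_const m) ((hρ.integrable one_le_two).const_mul s),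
      integral_const_mul, hmean]
    simp
  · rw [← variance_id_map hX.aemeasurable, hlaw, variance_id_map hmeas.aemeasurable,
      variance_const_add (by fun_prop), variance_const_mul,
      variance_of_integral_eq_zero (by fun_prop) hmean, hvar, mul_one, Real.sqrt_sq hs]

/-- The mean square of an affine function of a standardized random variable. -/
lemma integral_sq_add_mul_of_standardized {ρ : Measure ℝ} [IsProbabilityMeasure ρ]
    (hρ : MemLp (fun x : ℝ => x) 2 ρ) (hmean : ∫ x, x ∂ρ = 0) (hvar : ∫ x, x ^ 2 ∂ρ = 1)
    (a b : ℝ) : ∫ x, (a + b * x) ^ 2 ∂ρ = a ^ 2 + b ^ 2 := by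
  have hexpand (x : ℝ) : (a + b * x) ^ 2 = a ^ 2 + 2 * a * b * x + b ^ 2 * x ^ 2 := by ring
  have hlin : Integrable (fun x : ℝ => 2 * a * b * x) ρ :=
    (hρ.integrable one_le_two).const_mul _
  simp_rw [hexpand]
  rw [integral_add (by fun_prop) (hρ.integrable_sq.const_mul _),
    integral_add (integrable_const _) hlin, integral_const_mul, integral_const_mul, hmean, hvar]
  simp

/-- For a location-scale family generated by a base probability measure `ρ` on `ℝ` with
finite second moment, mean `0` and unit second moment: if `μᵢ` is the pushforward of `ρ`
under `x ↦ mᵢ + sᵢ * x` with `sᵢ ≥ 0`, then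
`W₂(μ₁, μ₂) = sqrt((m₁ - m₂)² + (s₁ - s₂)²)`. -/
theorem wasserstein2_locationScale
    (ρ : Measure ℝ) (hρ : IsProbabilityMeasure ρ)
    (hmom : ∫⁻ x, ENNReal.ofReal (|x| ^ (2 : ℝ)) ∂ρ < ⊤)
    (hmean : ∫ x, x ∂ρ = 0) (hvar : ∫ x, x ^ 2 ∂ρ = 1)
    (m₁ m₂ s₁ s₂ : ℝ) (hs₁ : 0 ≤ s₁) (hs₂ : 0 ≤ s₂) :
    wassersteinDist 2 (ρ.map (fun x => m₁ + s₁ * x)) (ρ.map (fun x => m₂ + s₂ * x)) =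
      ENNReal.ofReal (Real.sqrt ((m₁ - m₂) ^ 2 + (s₁ - s₂) ^ 2)) := by
  have hρ2 : MemLp (fun x : ℝ => x) 2 ρ :=
    (memLp_two_iff_integrable_sq (by fun_prop)).2
      (Integrable.of_integral_ne_zero (by rw [hvar]; exact one_ne_zero))
  have hcost (γ : Measure (ℝ × ℝ)) : ∫⁻ x, ENNReal.ofReal (|x.1 - x.2| ^ (2 : ℝ)) ∂γ =
      ∫⁻ x, ENNReal.ofReal ((x.1 - x.2) ^ 2) ∂γ := by
    simp only [Real.rpow_two, sq_abs]
  suffices h : (⨅ (γ : Measure (ℝ × ℝ)) (_ : IsProbabilityMeasure γ)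
      (_ : γ.map Prod.fst = ρ.map (fun x => m₁ + s₁ * x))
      (_ : γ.map Prod.snd = ρ.map (fun x => m₂ + s₂ * x)),
      ∫⁻ x, ENNReal.ofReal (|x.1 - x.2| ^ (2 : ℝ)) ∂γ) =
      ENNReal.ofReal ((m₁ - m₂) ^ 2 + (s₁ - s₂) ^ 2) by
    rw [wassersteinDist, h, Real.sqrt_eq_rpow,
      ENNReal.ofReal_rpow_of_nonneg (by positivity) (by positivity)]
  apply le_antisymm
  · have hmeas : Measurable fun x : ℝ => (m₁ + s₁ * x, m₂ + s₂ * x) := by fun_prop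
    refine iInf₂_le_of_le (ρ.map fun x => (m₁ + s₁ * x, m₂ + s₂ * x))
      (Measure.isProbabilityMeasure_map hmeas.aemeasurable) (iInf₂_le_of_le
        (Measure.map_map measurable_fst hmeas) (Measure.map_map measurable_snd hmeas) ?_)
    have hdiff (x : ℝ) : m₁ + s₁ * x - (m₂ + s₂ * x) = (m₁ - m₂) + (s₁ - s₂) * x := by ring
    have hint : Integrable (fun x : ℝ => ((m₁ - m₂) + (s₁ - s₂) * x) ^ 2) ρ :=
      ((memLp_const (m₁ - m₂)).add (hρ2.const_mul (s₁ - s₂))).integrable_sq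
    rw [hcost, lintegral_map (by fun_prop) hmeas]
    simp_rw [hdiff]
    rw [← ofReal_integral_eq_lintegral_ofReal hint (ae_of_all _ fun x => sq_nonneg _),
      integral_sq_add_mul_of_standardized hρ2 hmean hvar]
  · refine le_iInf₂ fun γ hγ => le_iInf₂ fun hfst hsnd => ?_
    obtain ⟨hX, hmX, hsX⟩ :=
      memLp_and_moments_of_map_eq_locationScale hρ2 hmean hvar hs₁ measurable_fst hfst
    obtain ⟨hY, hmY, hsY⟩ :=
      memLp_and_moments_of_map_eq_locationScale hρ2 hmean hvar hs₂ measurable_snd hsnd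
    have hle := sq_sub_add_sq_sub_le_integral_sq_sub hX hY
    rw [hmX, hmY, hsX, hsY] at hle
    have hint : Integrable (fun x : ℝ × ℝ => (x.1 - x.2) ^ 2) γ := (hX.sub hY).integrable_sq
    rw [hcost, ← ofReal_integral_eq_lintegral_ofReal hint
      (ae_of_all _ fun x => sq_nonneg _)]
    exact ENNReal.ofReal_le_ofReal hle
end

section
/- Let μ_prior ∈ ℝ, σ_prior > 0, σ > 0 and n ≥ 1 a natural number. For ȳ ∈ ℝ define μ_post(ȳ) = (μ_prior/σ_prior² + n·ȳ/σ²)/(1/σ_prior² + n/σ²) and σ_post² = 1/(1/σ_prior² + n/σ²). Then the expectation of (μ_prior − μ_post(ȳ))² + (σ_prior − σ_post)² when ȳ is distributed according to the prior predictive distribution N(μ_prior, σ_prior² + σ²/n) equals σ_prior²/(σ²/(n·σ_prior²) + 1) + σ_prior²·(1 − (1 + n·σ_prior²/σ²)^(−1/2))². -/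
open MeasureTheory ProbabilityTheory
open scoped ENNReal NNReal

lemma integral_sub_mean_sq_gaussianReal (μ : ℝ) (v : ℝ≥0) :
    ∫ y, (y - μ) ^ 2 ∂gaussianReal μ v = v := by
  have h := variance_fun_id_gaussianReal (μ := μ) (v := v)
  rwa [variance_eq_integral measurable_id'.aemeasurable, integral_id_gaussianReal] at h

lemma integrable_sub_mean_sq_gaussianReal (μ : ℝ) (v : ℝ≥0) :
    Integrable (fun y ↦ (y - μ) ^ 2) (gaussianReal μ v) :=
  ((memLp_id_gaussianReal 2).sub (memLp_const μ)).integrable_sq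

lemma sqrt_posterior_variance {s t m : ℝ} (hs : 0 < s) (ht : 0 < t) (hm : 0 < m) :
    √(1 / (1 / s ^ 2 + m / t ^ 2)) = s * (1 + m * s ^ 2 / t ^ 2) ^ (-(1 / 2) : ℝ) := by
  have h : 1 / (1 / s ^ 2 + m / t ^ 2) = s ^ 2 * (1 + m * s ^ 2 / t ^ 2)⁻¹ := by
    field_simp
  rw [h, Real.sqrt_mul (sq_nonneg s), Real.sqrt_sq hs.le, Real.sqrt_inv,
    Real.rpow_neg (by positivity), Real.sqrt_eq_rpow]

/-- The expected squared Wasserstein-2 learning metric between a Gaussian prior and the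
Gaussian posterior after `n` normal observations, averaged over the prior predictive
distribution `N(μ_prior, σ_prior² + σ²/n)` of the sample mean `ȳ`:
`E[(μ_prior - μ_post(ȳ))² + (σ_prior - σ_post)²]
  = σ_prior²/(σ²/(n σ_prior²) + 1) + σ_prior² (1 - (1 + n σ_prior²/σ²)^(-1/2))²`. -/
theorem expected_squared_wasserstein_learning (μprior σprior σ : ℝ)
    (hσprior : 0 < σprior) (hσ : 0 < σ) (n : ℕ) (hn : 1 ≤ n) :
    ∫ ybar,
        ((μprior - (μprior / σprior ^ 2 + n * ybar / σ ^ 2)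
            / (1 / σprior ^ 2 + n / σ ^ 2)) ^ 2
          + (σprior - Real.sqrt (1 / (1 / σprior ^ 2 + n / σ ^ 2))) ^ 2)
        ∂(gaussianReal μprior (σprior ^ 2 + σ ^ 2 / n).toNNReal)
      = σprior ^ 2 / (σ ^ 2 / (n * σprior ^ 2) + 1)
        + σprior ^ 2 * (1 - (1 + n * σprior ^ 2 / σ ^ 2) ^ (-(1 / 2) : ℝ)) ^ 2 := by
  have hm : (0 : ℝ) < n := by exact_mod_cast hn
  have hmean (y : ℝ) : (μprior - (μprior / σprior ^ 2 + n * y / σ ^ 2)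
      / (1 / σprior ^ 2 + n / σ ^ 2)) ^ 2
      = (n * σprior ^ 2 / (σ ^ 2 + n * σprior ^ 2)) ^ 2 * (y - μprior) ^ 2 := by
    rw [← mul_pow, ← neg_sq]
    congr 1
    field_simp
    ring
  simp_rw [hmean]
  rw [integral_add ((integrable_sub_mean_sq_gaussianReal _ _).const_mul _) (integrable_const _),
    integral_const_mul, integral_sub_mean_sq_gaussianReal, integral_const,
    Real.coe_toNNReal _ (by positivity), sqrt_posterior_variance hσprior hσ hm]
  simp only [probReal_univ, one_smul]
  congr 1
  · field_simp
    ring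
  · ring
end

section
/- Let μ_prior ∈ ℝ, σ_prior > 0, σ > 0 and n ≥ 1. With μ_post(ȳ) = (μ_prior/σ_prior² + n·ȳ/σ²)/(1/σ_prior² + n/σ²) and σ_post² = 1/(1/σ_prior² + n/σ²), the expected Wasserstein-2 learning, E over ȳ ~ N(μ_prior, σ_prior² + σ²/n) of W_2(N(μ_prior, σ_prior²), N(μ_post(ȳ), σ_post²)), is at most sqrt( σ_prior²/(σ²/(n·σ_prior²) + 1) + σ_prior²·(1 − (1 + n·σ_prior²/σ²)^(−1/2))² ). -/
open MeasureTheory ProbabilityTheory Filter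
open scoped ENNReal NNReal

lemma integrable_affine_sq_gaussianReal (m a b : ℝ) (v : ℝ≥0) :
    Integrable (fun x ↦ (a * (x - m) + b) ^ 2) (gaussianReal m v) := by
  have h : MemLp (fun x : ℝ ↦ x) 2 (gaussianReal m v) := memLp_id_gaussianReal 2
  exact (((h.sub (memLp_const m)).const_mul a).add (memLp_const b)).integrable_sq

lemma integral_affine_sq_gaussianReal (m a b : ℝ) (v : ℝ≥0) :
    ∫ x, (a * (x - m) + b) ^ 2 ∂gaussianReal m v = a ^ 2 * v + b ^ 2 := by
  have h : MemLp (fun x : ℝ ↦ x) 2 (gaussianReal m v) := memLp_id_gaussianReal 2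
  have hsub : MemLp (fun x : ℝ ↦ x - m) 2 (gaussianReal m v) := h.sub (memLp_const m)
  have hint : Integrable (fun x : ℝ ↦ x - m) (gaussianReal m v) := hsub.integrable (by norm_num)
  have hmean : ∫ x, (x - m) ∂gaussianReal m v = 0 := by
    rw [integral_sub (h.integrable (by norm_num)) (integrable_const m)]
    simp [integral_id_gaussianReal]
  have hvar : ∫ x, (x - m) ^ 2 ∂gaussianReal m v = v := by
    have := variance_eq_integral (μ := gaussianReal m v) (X := fun x ↦ x) h.aemeasurable
    rw [variance_fun_id_gaussianReal, integral_id_gaussianReal] at this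
    exact this.symm
  have hexpand : ∀ x : ℝ, (a * (x - m) + b) ^ 2
      = (a ^ 2 * (x - m) ^ 2 + (2 * a * b) * (x - m)) + b ^ 2 := fun x ↦ by ring
  simp_rw [hexpand]
  have hquad : Integrable (fun x : ℝ ↦ a ^ 2 * (x - m) ^ 2 + (2 * a * b) * (x - m))
      (gaussianReal m v) := (hsub.integrable_sq.const_mul _).add (hint.const_mul _)
  rw [integral_add hquad (integrable_const _), integral_add (hsub.integrable_sq.const_mul _) (hint.const_mul _),
    integral_const_mul, integral_const_mul, hmean, hvar]
  simp

lemma gaussianReal_zero_one_map_affine (m s : ℝ) :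
    (gaussianReal 0 1).map (fun z ↦ m + s * z) = gaussianReal m (s ^ 2).toNNReal := by
  have hcomp : (fun z : ℝ ↦ m + s * z) = (fun x ↦ m + x) ∘ (fun z ↦ s * z) := rfl
  rw [hcomp, ← Measure.map_map (by fun_prop) (by fun_prop), gaussianReal_map_const_mul,
    gaussianReal_map_const_add]
  congr 1
  · simp
  · ext
    simp [sq_nonneg]

/-- The comonotone coupling bounds the Wasserstein-2 distance between two real Gaussians. -/
lemma wassersteinDist_two_gaussianReal_le (m m' s t : ℝ) :
    wassersteinDist 2 (gaussianReal m (s ^ 2).toNNReal) (gaussianReal m' (t ^ 2).toNNReal)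
      ≤ ENNReal.ofReal (Real.sqrt ((m' - m) ^ 2 + (s - t) ^ 2)) := by
  have hmeas : Measurable (fun z : ℝ ↦ (m + s * z, m' + t * z)) := by fun_prop
  have hcost : ∫⁻ x, ENNReal.ofReal (|x.1 - x.2| ^ (2 : ℝ))
      ∂((gaussianReal 0 1).map (fun z : ℝ ↦ (m + s * z, m' + t * z)))
      = ENNReal.ofReal ((m' - m) ^ 2 + (s - t) ^ 2) := by
    rw [lintegral_map (by fun_prop) hmeas]
    have hsq : ∀ z : ℝ, |m + s * z - (m' + t * z)| ^ (2 : ℝ)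
        = ((s - t) * (z - 0) + (m - m')) ^ 2 := fun z ↦ by
      rw [Real.rpow_two, sq_abs]
      ring
    simp_rw [hsq]
    rw [← ofReal_integral_eq_lintegral_ofReal (integrable_affine_sq_gaussianReal _ _ _ _)
      (ae_of_all _ fun _ ↦ sq_nonneg _), integral_affine_sq_gaussianReal]
    congr 1
    push_cast
    ring
  rw [wassersteinDist, Real.sqrt_eq_rpow,
    ← ENNReal.ofReal_rpow_of_nonneg (by positivity) (by norm_num), ← hcost]
  refine ENNReal.rpow_le_rpow ?_ (by norm_num)
  refine iInf_le_of_le _ (iInf_le_of_le (Measure.isProbabilityMeasure_map hmeas.aemeasurable)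
    (iInf_le_of_le ?_ (iInf_le_of_le ?_ le_rfl)))
  · rw [Measure.map_map measurable_fst hmeas]
    exact gaussianReal_zero_one_map_affine m s
  · rw [Measure.map_map measurable_snd hmeas]
    exact gaussianReal_zero_one_map_affine m' t

lemma integral_sqrt_le_sqrt_integral {Ω : Type*} [MeasurableSpace Ω] {P : Measure Ω}
    [IsProbabilityMeasure P] {f : Ω → ℝ} (hf : Integrable f P) (hf0 : ∀ x, 0 ≤ f x)
    (hsqrt : Integrable (fun x ↦ Real.sqrt (f x)) P) :
    ∫ x, Real.sqrt (f x) ∂P ≤ Real.sqrt (∫ x, f x ∂P) :=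
  Real.strictConcaveOn_sqrt.concaveOn.le_map_integral Real.continuous_sqrt.continuousOn
    isClosed_Ici (ae_of_all _ hf0) hf hsqrt

/-- The expected Wasserstein-2 learning, averaging
`W₂(N(μ_prior, σ_prior²), N(μ_post(ȳ), σ_post²))` over the prior predictive distribution
`ȳ ~ N(μ_prior, σ_prior² + σ²/n)`, is bounded by
`sqrt(σ_prior²/(σ²/(n σ_prior²) + 1) + σ_prior² (1 - (1 + n σ_prior²/σ²)^(-1/2))²)`. -/
theorem expected_wasserstein_learning_le (μprior σprior σ : ℝ)
    (hσprior : 0 < σprior) (hσ : 0 < σ) (n : ℕ) (hn : 1 ≤ n) :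
    ∫ ybar,
        (wassersteinDist 2 (gaussianReal μprior (σprior ^ 2).toNNReal)
          (gaussianReal
            ((μprior / σprior ^ 2 + n * ybar / σ ^ 2) / (1 / σprior ^ 2 + n / σ ^ 2))
            (1 / (1 / σprior ^ 2 + n / σ ^ 2)).toNNReal)).toReal
        ∂(gaussianReal μprior (σprior ^ 2 + σ ^ 2 / n).toNNReal)
      ≤ Real.sqrt (σprior ^ 2 / (σ ^ 2 / (n * σprior ^ 2) + 1)
          + σprior ^ 2 * (1 - (1 + n * σprior ^ 2 / σ ^ 2) ^ (-(1 / 2) : ℝ)) ^ 2) := by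
  have hn0 : (0 : ℝ) < n := by exact_mod_cast hn
  set r : ℝ := 1 + n * σprior ^ 2 / σ ^ 2 with hr
  have hr0 : 0 < r := by positivity
  set t : ℝ := σprior * r ^ (-(1 / 2) : ℝ) with ht
  have ht2 : 1 / (1 / σprior ^ 2 + n / σ ^ 2) = t ^ 2 := by
    have hpow : (r ^ (-(1 / 2) : ℝ)) ^ 2 = r⁻¹ := by
      rw [← Real.rpow_natCast, ← Real.rpow_mul hr0.le, ← Real.rpow_neg_one]
      norm_num
    rw [ht, mul_pow, hpow, hr]
    field_simp
  set k : ℝ := (n / σ ^ 2) / (1 / σprior ^ 2 + n / σ ^ 2) with hk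
  have hmean : ∀ y : ℝ, (μprior / σprior ^ 2 + n * y / σ ^ 2) / (1 / σprior ^ 2 + n / σ ^ 2)
      - μprior = k * (y - μprior) := fun y ↦ by
    rw [hk]
    field_simp
    ring
  set P := gaussianReal μprior (σprior ^ 2 + σ ^ 2 / n).toNNReal with hP
  set g : ℝ → ℝ := fun y ↦ (k * (y - μprior) + 0) ^ 2 + (σprior - t) ^ 2 with hg
  have hg0 : ∀ y, 0 ≤ g y := fun y ↦ by positivity
  have hsq : Integrable (fun y ↦ (k * (y - μprior) + 0) ^ 2) P :=
    integrable_affine_sq_gaussianReal _ _ _ _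
  have hgint : Integrable g P := hsq.add (integrable_const _)
  have hsqrt : Integrable (fun y ↦ Real.sqrt (g y)) P := by
    refine (hgint.add (integrable_const 1)).mono' (by fun_prop) (ae_of_all _ fun y ↦ ?_)
    rw [Real.norm_of_nonneg (Real.sqrt_nonneg _)]
    refine Real.sqrt_le_iff.2 ⟨by have := hg0 y; simp; linarith, ?_⟩
    have := hg0 y
    simp only [Pi.add_apply]
    nlinarith
  have hgval : ∫ y, g y ∂P = σprior ^ 2 / (σ ^ 2 / (n * σprior ^ 2) + 1)
      + σprior ^ 2 * (1 - r ^ (-(1 / 2) : ℝ)) ^ 2 := by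
    rw [hg, integral_add hsq (integrable_const _), hP, integral_affine_sq_gaussianReal,
      Real.coe_toNNReal _ (by positivity), ht, hk]
    simp only [integral_const, probReal_univ, one_smul]
    congr 1
    · field_simp
      ring
    · ring
  rw [← hgval]
  refine le_trans (integral_mono_of_nonneg (ae_of_all _ fun _ ↦ ENNReal.toReal_nonneg) hsqrt
    (ae_of_all _ fun y ↦ ?_)) (integral_sqrt_le_sqrt_integral hgint hg0 hsqrt)
  refine ENNReal.toReal_le_of_le_ofReal (Real.sqrt_nonneg _) ?_
  rw [ht2]
  refine (wassersteinDist_two_gaussianReal_le _ _ _ _).trans_eq ?_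
  simp only [hmean, hg, add_zero]
end
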